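/- For every n ≥ 2, all real numbers y_1, …, y_n, and every integer 2 ≤ ℓ ≤ n, one has |s_ℓ(y)|^(2/ℓ) ≤ ℓ · s_1(y)^2 − (ℓ−1) · s_2(y). -/

import Mathlib

open Finset Real

/-- The non-normalized elementary symmetric function `S_m(y)`. -/
noncomputable def esymmS (n m : ℕ) (y : Fin n → ℝ) : ℝ :=
  ∑ A ∈ powersetCard m (univ : Finset (Fin n)), ∏ i ∈ A, y i

/-- The elementary symmetric mean `s_m(y) = S_m(y) / binom(n,m)`. -/
noncomputable def smean (n m : ℕ) (y : Fin n → ℝ) : ℝ :=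
  esymmS n m y / (n.choose m)

/-!
Differentiating a real-rooted polynomial keeps it real-rooted (Rolle), and by Vieta's formulas the
elementary symmetric means of the roots do not change. Differentiating `∏ i, (X - y i)` down to
degree `ℓ` thus reduces the inequality to `n = ℓ`. In that case `s_ℓ(y)` is the product of all the
`y i`, the right-hand side is the mean of their squares, and the inequality is AM-GM for these
squares.
-/

section Esymm

variable {R : Type*} [CommSemiring R]

theorem multiset_esymm_one (s : Multiset R) : s.esymm 1 = s.sum := by
  simp [Multiset.esymm, Multiset.powersetCard_one]

theorem multiset_esymm_card (s : Multiset R) : s.esymm s.card = s.prod := by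
  simp [Multiset.esymm, Multiset.powersetCard_self]

theorem multiset_esymm_eq_zero_of_card_lt {s : Multiset R} {k : ℕ} (hk : s.card < k) :
    s.esymm k = 0 := by
  simp [Multiset.esymm, Multiset.powersetCard_eq_empty k hk]

theorem multiset_esymm_cons_succ (a : R) (s : Multiset R) (k : ℕ) :
    (a ::ₘ s).esymm (k + 1) = s.esymm (k + 1) + a * s.esymm k := by
  simp [Multiset.esymm, Multiset.powersetCard_cons, Multiset.sum_map_mul_left]

theorem multiset_sum_map_sq {R : Type*} [CommRing R] (s : Multiset R) :
    (s.map (· ^ 2)).sum = s.sum ^ 2 - 2 * s.esymm 2 := by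
  induction s using Multiset.induction_on with
  | empty =>
    have hesymm : (0 : Multiset R).esymm 2 = 0 := multiset_esymm_eq_zero_of_card_lt (by simp)
    simp [hesymm]
  | cons a s ih =>
    rw [Multiset.map_cons, Multiset.sum_cons, ih, Multiset.sum_cons, multiset_esymm_cons_succ,
      multiset_esymm_one]
    ring

end Esymm

section EsymmMean

variable {K : Type*}

/-- The `k`th elementary symmetric mean of a multiset `s`. Unlike `smean`, it is indexed by an
unordered collection, so that it applies to the roots of a polynomial. It is `0` for
`k > s.card`, both the numerator and the denominator being `0`. -/
noncomputable def esymmMean [Semifield K] (s : Multiset K) (k : ℕ) : K :=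
  s.esymm k / s.card.choose k

theorem smean_eq_esymmMean (n k : ℕ) (y : Fin n → ℝ) :
    smean n k y = esymmMean ((univ : Finset (Fin n)).val.map y) k := by
  rw [smean, esymmMean, Finset.esymm_map_val, Multiset.card_map, Finset.card_val, Finset.card_fin,
    esymmS]

theorem esymmMean_card [Semifield K] (s : Multiset K) : esymmMean s s.card = s.prod := by
  simp [esymmMean, multiset_esymm_card]

theorem choose_mul_esymmMean [Semifield K] [CharZero K] (s : Multiset K) (k : ℕ) :
    s.card.choose k * esymmMean s k = s.esymm k := by
  refine mul_div_cancel_of_imp' fun hchoose => ?_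
  rw [Nat.cast_eq_zero, Nat.choose_eq_zero_iff] at hchoose
  exact multiset_esymm_eq_zero_of_card_lt hchoose

theorem multiset_sum_map_sq_div_card [Field K] [CharZero K] {s : Multiset K} (hs : s ≠ 0) :
    (s.map (· ^ 2)).sum / s.card =
      s.card * esymmMean s 1 ^ 2 - (s.card - 1) * esymmMean s 2 := by
  have hcard : (s.card : K) ≠ 0 := Nat.cast_ne_zero.mpr (Multiset.card_pos.mpr hs).ne'
  have hsum : s.sum = s.card * esymmMean s 1 := by
    rw [← multiset_esymm_one, ← choose_mul_esymmMean, Nat.choose_one_right]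
  have hesymm : s.esymm 2 = s.card * (s.card - 1) / 2 * esymmMean s 2 := by
    rw [← choose_mul_esymmMean, Nat.cast_choose_two]
  rw [multiset_sum_map_sq, hsum, hesymm]
  field_simp

end EsymmMean

section Derivative

open Polynomial

variable {K : Type*} [Field K] [CharZero K]

theorem coeff_eq_esymmMean_roots {p : K[X]} (hp : p.Splits) {j k : ℕ}
    (hjk : j + k = p.natDegree) :
    p.coeff j = p.leadingCoeff * (-1) ^ k * (p.natDegree.choose k * esymmMean p.roots k) := by
  rw [coeff_eq_esymm_roots_of_splits hp (by lia), ← hjk, Nat.add_sub_cancel_left, hjk,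
    hp.natDegree_eq_card_roots, choose_mul_esymmMean]

theorem esymmMean_roots_derivative {p : K[X]} (hp : p.Splits) (hp' : p.derivative.Splits) {k : ℕ}
    (hk : k < p.natDegree) : esymmMean p.derivative.roots k = esymmMean p.roots k := by
  obtain ⟨j, hj⟩ : ∃ j, j + k + 1 = p.natDegree := ⟨p.natDegree - k - 1, by lia⟩
  have hdeg : p.derivative.natDegree = j + k := by
    rw [natDegree_derivative]
    lia
  have hcoeff : p.derivative.coeff j = p.coeff (j + 1) * (j + 1) := coeff_derivative p j
  rw [coeff_eq_esymmMean_roots hp' hdeg.symm, coeff_eq_esymmMean_roots (k := k) hp (by lia),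
    leadingCoeff_derivative, hdeg, ← hj] at hcoeff
  have hchoose : ((j + k).choose k * (j + k + 1) : K) = (j + k + 1).choose k * (j + 1) := by
    have := Nat.choose_mul_succ_eq (j + k) k
    rw [show j + k + 1 - k = j + 1 by lia] at this
    exact_mod_cast this
  have hlead : p.leadingCoeff ≠ 0 := by
    rw [leadingCoeff_ne_zero]
    rintro rfl
    simp at hk
  have hne : p.leadingCoeff * (-1) ^ k * ((j + k).choose k * (j + k + 1)) ≠ 0 :=
    mul_ne_zero (mul_ne_zero hlead (by simp))
      (mod_cast (Nat.mul_pos (Nat.choose_pos (by lia)) (Nat.succ_pos _)).ne')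
  apply mul_left_cancel₀ hne
  push_cast at hcoeff
  linear_combination hcoeff - p.leadingCoeff * (-1) ^ k * esymmMean p.roots k * hchoose

theorem splits_derivative_of_splits {p : ℝ[X]} (hp : p.Splits) : p.derivative.Splits := by
  have hrolle : p.roots.card ≤ p.derivative.roots.card + 1 := card_roots_le_derivative p
  have hle : p.derivative.roots.card ≤ p.derivative.natDegree := card_roots' p.derivative
  rw [splits_iff_card_roots]
  rw [natDegree_derivative, hp.natDegree_eq_card_roots] at hle ⊢
  lia

theorem exists_card_eq_esymmMean_eq_of_card_eq_succ {s : Multiset ℝ} {m : ℕ} (hs : s.card = m + 1) :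
    ∃ t : Multiset ℝ, t.card = m ∧ ∀ k ≤ m, esymmMean t k = esymmMean s k := by
  let p : ℝ[X] := (s.map (X - C ·)).prod
  have hroots : p.roots = s := roots_multiset_prod_X_sub_C s
  have hdeg : p.natDegree = m + 1 := by rw [natDegree_multiset_prod_X_sub_C_eq_card, hs]
  have hp : p.Splits := by rw [splits_iff_card_roots, hroots, hs, hdeg]
  have hp' := splits_derivative_of_splits hp
  refine ⟨p.derivative.roots, ?_, fun k hk => ?_⟩
  · rw [← hp'.natDegree_eq_card_roots, natDegree_derivative, hdeg, Nat.add_sub_cancel]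
  · rw [esymmMean_roots_derivative hp hp' (by lia), hroots]

theorem exists_card_eq_esymmMean_eq {s : Multiset ℝ} {m : ℕ} (hm : m ≤ s.card) :
    ∃ t : Multiset ℝ, t.card = m ∧ ∀ k ≤ m, esymmMean t k = esymmMean s k := by
  obtain ⟨n, hn⟩ : ∃ n, s.card = n := ⟨_, rfl⟩
  rw [hn] at hm
  induction n, hm using Nat.le_induction generalizing s with
  | base => exact ⟨s, hn, fun _ _ => rfl⟩
  | succ n hmn ih =>
    obtain ⟨t, ht, hts⟩ := exists_card_eq_esymmMean_eq_of_card_eq_succ hn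
    obtain ⟨u, hu, hut⟩ := ih ht
    exact ⟨u, hu, fun k hk => (hut k hk).trans (hts k (hk.trans hmn))⟩

end Derivative

section GeomMean

theorem multiset_geom_mean_le_arith_mean {s : Multiset ℝ} (hs : s ≠ 0) (hnonneg : ∀ a ∈ s, 0 ≤ a) :
    s.prod ^ (s.card : ℝ)⁻¹ ≤ s.sum / s.card := by
  have hcard : 0 < (s.card : ℝ) := mod_cast Multiset.card_pos.mpr hs
  simpa [← Multiset.prod_eq_prod_coe, ← Multiset.sum_eq_sum_coe] using
    Real.geom_mean_le_arith_mean (univ : Finset s) (fun _ => 1) (fun a => (a : ℝ)) (by simp)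
      (by simpa using hcard) (fun a _ => hnonneg a (Multiset.coe_mem))

theorem abs_multiset_prod_rpow_le {s : Multiset ℝ} (hs : s ≠ 0) :
    |s.prod| ^ (2 / s.card : ℝ) ≤ (s.map (· ^ 2)).sum / s.card :=
  calc |s.prod| ^ (2 / s.card : ℝ)
      = (s.map (· ^ 2)).prod ^ (s.card : ℝ)⁻¹ := by
        rw [Multiset.prod_map_pow, Multiset.map_id', div_eq_mul_inv,
          Real.rpow_mul (abs_nonneg _), Real.rpow_two, sq_abs]
    _ ≤ (s.map (· ^ 2)).sum / s.card := by
        simpa using multiset_geom_mean_le_arith_mean (s := s.map (· ^ 2)) (by simpa using hs)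
          (by simp [sq_nonneg])

end GeomMean

theorem sl_bound_s1_s2 (n : ℕ) (hn : 2 ≤ n) (y : Fin n → ℝ) (ℓ : ℕ) (hℓ : 2 ≤ ℓ) (hℓn : ℓ ≤ n) :
    |smean n ℓ y| ^ ((2 : ℝ) / ℓ) ≤ ℓ * smean n 1 y ^ 2 - ((ℓ : ℝ) - 1) * smean n 2 y := by
  obtain ⟨t, rfl, hmean⟩ := exists_card_eq_esymmMean_eq
    (s := (univ : Finset (Fin n)).val.map y) (m := ℓ) (by simpa using hℓn)
  have ht : t ≠ 0 := Multiset.card_pos.mp (by lia)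
  simp only [smean_eq_esymmMean]
  rw [← hmean _ le_rfl, ← hmean 1 (by lia), ← hmean 2 hℓ, esymmMean_card,
    ← multiset_sum_map_sq_div_card ht]
  exact abs_multiset_prod_rpow_le ht
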